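/- (Evaluation of the Askey-Wilson integral) Let 0<q<1 and a,b,c,d∈ℂ with |a|,|b|,|c|,|d|<1. Then (1/(2π)) ∫_0^π w_{a,b,c,d}(e^{iθ}) dθ = (abcd;q)_∞ / (ab, ac, ad, bc, bd, cd, q;q)_∞. -/

import Mathlib

/-!
Let `w` be the Askey-Wilson weight. A companion `g` of `w`, chosen so that `g (q z) = -g (1/z)`, is
holomorphic for `|q| ≤ |z| ≤ 1`; shifting the contour shows that its average over the unit circle
vanishes. On that circle `g z + g (1/z)` is `w z` times an affine function of `z + 1/z`, and so is
the weight with `a` replaced by `q a`. Eliminating the average of `(z + 1/z) w z` gives the ratio of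
the averages for the parameters `(q a, b, c, d)` and `(a, b, c, d)`, which is also the ratio of the
claimed values. Iterating, `a` can be moved to `lim a qⁿ = 0`, and by symmetry so can all
parameters: only a constant depending on `q` is left. It is read off at `(s, -s, q, -q)` with
`s² = q`, where the duplication formula for `(·;q)_∞` collapses `w z` to `(1 - z²) (1 - z⁻²)`.
-/

noncomputable section

/-- The infinite q-shifted factorial `(a;q)_∞`. -/
def qpi (q a : ℂ) : ℂ := ∏' j : ℕ, (1 - a * q ^ j)

/-- The Askey-Wilson weight
`w_{a,b,c,d}(z) = (z²,z^{-2};q)_∞ / (az,az^{-1},bz,bz^{-1},cz,cz^{-1},dz,dz^{-1};q)_∞`. -/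
def AWw (q a b c d z : ℂ) : ℂ :=
  qpi q (z ^ 2) * qpi q (z⁻¹ ^ 2) /
    (qpi q (a * z) * qpi q (a * z⁻¹) * qpi q (b * z) * qpi q (b * z⁻¹) *
      qpi q (c * z) * qpi q (c * z⁻¹) * qpi q (d * z) * qpi q (d * z⁻¹))

open Filter Topology Metric
open Real (circleAverage)

/-! ### Averages over circles -/

section CircleAverage

variable {E : Type*} [NormedAddCommGroup E]

lemma circleAverage_comp_mul_left [NormedSpace ℝ E] (f : ℂ → E) (c : ℂ) (R : ℝ) :
    circleAverage (fun z => f (c * z)) 0 R = circleAverage f 0 (‖c‖ * R) := by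
  rw [Real.circleAverage_def, Real.circleAverage_eq_integral_add (f := f) c.arg]
  congr! 4 with θ
  calc c * circleMap 0 R θ = circleMap 0 ‖c‖ c.arg * circleMap 0 R θ := by
        rw [circleMap_zero ‖c‖, Complex.norm_mul_exp_arg_mul_I]
    _ = circleMap 0 (‖c‖ * R) (θ + c.arg) := by rw [circleMap_zero_mul, add_comm]

lemma circleAverage_eq_of_differentiableAt_annulus [NormedSpace ℂ E] [CompleteSpace E]
    {f : ℂ → E} {c : ℂ} {r R : ℝ} (hr : 0 < r) (hrR : r ≤ R)
    (hf : ∀ z ∈ closedBall c R \ ball c r, DifferentiableAt ℂ f z) :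
    circleAverage f c R = circleAverage f c r := by
  rw [Real.circleAverage_eq_circleIntegral (hr.trans_le hrR).ne',
    Real.circleAverage_eq_circleIntegral hr.ne',
    Complex.circleIntegral_sub_center_inv_smul_eq_of_differentiable_on_annulus_off_countable hr hrR
      Set.countable_empty (fun z hz => (hf z hz).continuousAt.continuousWithinAt)
      (fun z hz => hf z ⟨ball_subset_closedBall hz.1.1, mt (ball_subset_closedBall ·) hz.1.2⟩)]

lemma circleAverage_eq_integral_upper_half [NormedSpace ℝ E] {f : ℂ → E}
    (hf : CircleIntegrable f 0 1) (hinv : ∀ z ∈ sphere (0 : ℂ) 1, f z⁻¹ = f z) :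
    circleAverage f 0 1 = Real.pi⁻¹ • ∫ θ in (0 : ℝ)..Real.pi, f (circleMap 0 1 θ) := by
  have hreflect (θ : ℝ) : f (circleMap 0 1 (2 * Real.pi - θ)) = f (circleMap 0 1 θ) := by
    rw [← hinv (circleMap 0 1 θ) (circleMap_mem_sphere 0 zero_le_one θ), circleMap_zero_inv,
      inv_one, ← periodic_circleMap 0 1 (-θ), sub_eq_neg_add]
  have hlower : ∫ θ in Real.pi..2 * Real.pi, f (circleMap 0 1 θ) =
      ∫ θ in (0 : ℝ)..Real.pi, f (circleMap 0 1 θ) := by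
    have h := intervalIntegral.integral_comp_sub_left (a := 0) (b := Real.pi)
      (fun θ => f (circleMap 0 1 θ)) (2 * Real.pi)
    simp only [hreflect] at h
    rw [h]
    ring_nf
  have hpi : Real.pi ∈ Set.uIcc 0 (2 * Real.pi) :=
    Set.mem_uIcc.mpr (Or.inl ⟨Real.pi_nonneg, by linarith [Real.pi_nonneg]⟩)
  rw [Real.circleAverage_def, ← intervalIntegral.integral_add_adjacent_intervals
    (IntervalIntegrable.mono_set hf (Set.uIcc_subset_uIcc_left hpi))
    (IntervalIntegrable.mono_set hf (Set.uIcc_subset_uIcc_right hpi)), hlower,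
    ← two_smul ℝ, smul_smul]
  congr 1
  field_simp

lemma continuousOn_circleAverage_of_continuousOn_prod [NormedSpace ℝ E] {X : Type*}
    [TopologicalSpace X] {f : X → ℂ → E} {s : Set X} {c : ℂ} {R : ℝ}
    (hf : ContinuousOn (fun p : X × ℂ => f p.1 p.2) (s ×ˢ sphere c |R|)) :
    ContinuousOn (fun x => circleAverage (f x) c R) s := by
  rw [continuousOn_iff_continuous_domRestrict]
  refine (intervalIntegral.continuous_parametric_intervalIntegral_of_continuous'
    (f := fun (x : s) θ => f x (circleMap c R θ)) ?_ 0 (2 * Real.pi)).const_smul _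
  exact hf.comp_continuous (f := fun p : s × ℝ => ((p.1 : X), circleMap c R p.2)) (by fun_prop)
    fun p => ⟨p.1.2, circleMap_mem_sphere' c R p.2⟩

lemma circleAverage_pow_zero_one {n : ℕ} (hn : n ≠ 0) :
    circleAverage (fun z : ℂ => z ^ n) 0 1 = 0 := by
  rw [(Differentiable.diffContOnCl (by fun_prop)).circleAverage, zero_pow hn]

end CircleAverage

/-! ### The infinite `q`-shifted factorial -/

section UnitBall

variable {R : Type*} [NormedDivisionRing R]

lemma one_sub_ne_zero_of_norm_lt_one {a : R} (ha : ‖a‖ < 1) : 1 - a ≠ 0 :=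
  sub_ne_zero_of_ne fun h => by simp [← h] at ha

lemma norm_mul_lt_one {a b : R} (ha : ‖a‖ < 1) (hb : ‖b‖ ≤ 1) : ‖a * b‖ < 1 := by
  rw [norm_mul]
  exact mul_lt_one_of_nonneg_of_lt_one_left (norm_nonneg _) ha hb

lemma norm_mul_mul_mul_lt_one {a b c d : R} (ha : ‖a‖ < 1) (hb : ‖b‖ < 1) (hc : ‖c‖ < 1)
    (hd : ‖d‖ < 1) : ‖a * b * c * d‖ < 1 :=
  norm_mul_lt_one (norm_mul_lt_one (norm_mul_lt_one ha hb.le) hc.le) hd.le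

end UnitBall

section ShiftedFactorial

variable {q : ℂ}

lemma norm_mul_pow_lt_one (hq : ‖q‖ < 1) {a : ℂ} (ha : ‖a‖ < 1) (n : ℕ) : ‖a * q ^ n‖ < 1 :=
  norm_mul_lt_one ha (by simpa using pow_le_one₀ (norm_nonneg q) hq.le)

lemma summable_norm_neg_mul_pow (hq : ‖q‖ < 1) (a : ℂ) :
    Summable fun j : ℕ => ‖-(a * q ^ j)‖ := by
  simpa using (summable_geometric_of_lt_one (norm_nonneg _) hq).mul_left ‖a‖

lemma multipliable_one_sub_mul_pow (hq : ‖q‖ < 1) (a : ℂ) :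
    Multipliable fun j : ℕ => 1 - a * q ^ j := by
  simpa [sub_eq_add_neg] using multipliable_one_add_of_summable (summable_norm_neg_mul_pow hq a)

lemma qpi_eq_one_sub_mul (hq : ‖q‖ < 1) (a : ℂ) : qpi q a = (1 - a) * qpi q (q * a) := by
  have hshift : ∀ j : ℕ, 1 - a * q ^ (j + 1) = 1 - q * a * q ^ j := fun j => by ring
  have h : Multipliable fun j : ℕ => 1 - a * q ^ (j + 1) := by
    simpa only [hshift] using multipliable_one_sub_mul_pow hq (q * a)
  unfold qpi
  rw [tprod_eq_zero_mul' (f := fun j : ℕ => 1 - a * q ^ j) h]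
  simp only [hshift, pow_zero, mul_one]

lemma qpi_ne_zero (hq : ‖q‖ < 1) {a : ℂ} (ha : ‖a‖ < 1) : qpi q a ≠ 0 := by
  have hfactor : ∀ j : ℕ, 1 + -(a * q ^ j) ≠ 0 := fun j => by
    rw [← sub_eq_add_neg]
    exact one_sub_ne_zero_of_norm_lt_one (norm_mul_pow_lt_one hq ha j)
  simpa [qpi, sub_eq_add_neg] using
    tprod_one_add_ne_zero_of_summable hfactor (summable_norm_neg_mul_pow hq a)

lemma differentiable_qpi (hq : ‖q‖ < 1) : Differentiable ℂ (qpi q) := by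
  intro a
  have hsum : Summable fun j : ℕ => (‖a‖ + 1) * ‖q‖ ^ j :=
    (summable_geometric_of_lt_one (norm_nonneg _) hq).mul_left _
  have hbound : ∀ (j : ℕ), ∀ x ∈ ball (0 : ℂ) (‖a‖ + 1), ‖-(x * q ^ j)‖ ≤ (‖a‖ + 1) * ‖q‖ ^ j :=
    fun j x hx => by
      rw [norm_neg, norm_mul, norm_pow]
      gcongr
      exact (mem_ball_zero_iff.mp hx).le
  have hprod := hsum.hasProdLocallyUniformlyOn_nat_one_add isOpen_ball
    (Eventually.of_forall hbound) (fun j => by fun_prop)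
  have hdiff : DifferentiableOn ℂ (fun x => ∏' j : ℕ, (1 + -(x * q ^ j))) (ball 0 (‖a‖ + 1)) :=
    TendstoLocallyUniformlyOn.differentiableOn hprod
      (Eventually.of_forall fun s => by fun_prop) isOpen_ball
  simp only [← sub_eq_add_neg] at hdiff
  exact hdiff.differentiableAt (isOpen_ball.mem_nhds (by simp))

lemma continuous_qpi (hq : ‖q‖ < 1) : Continuous (qpi q) :=
  (differentiable_qpi hq).continuous

lemma qpi_mul_qpi_neg (hq : ‖q‖ < 1) (a : ℂ) : qpi q a * qpi q (-a) = qpi (q ^ 2) (a ^ 2) := by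
  unfold qpi
  rw [← (multipliable_one_sub_mul_pow hq a).tprod_mul (multipliable_one_sub_mul_pow hq (-a))]
  congr! 2 with j
  ring

lemma qpi_sq_mul_qpi_sq_mul (hq : ‖q‖ < 1) (a : ℂ) :
    qpi (q ^ 2) a * qpi (q ^ 2) (q * a) = qpi q a := by
  have hq2 : ‖q ^ 2‖ < 1 := by simpa using pow_lt_one₀ (norm_nonneg q) hq two_ne_zero
  have heven : ∀ j : ℕ, 1 - a * (q ^ 2) ^ j = 1 - a * q ^ (2 * j) := fun j => by ring
  have hodd : ∀ j : ℕ, 1 - q * a * (q ^ 2) ^ j = 1 - a * q ^ (2 * j + 1) := fun j => by ring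
  have h0 := multipliable_one_sub_mul_pow hq2 a
  have h1 := multipliable_one_sub_mul_pow hq2 (q * a)
  unfold qpi
  simp only [heven, hodd] at h0 h1 ⊢
  exact tprod_even_mul_odd (f := fun j : ℕ => 1 - a * q ^ j) h0 h1

lemma qpi_duplication {s : ℂ} (hs : ‖s ^ 2‖ < 1) (a : ℂ) :
    qpi (s ^ 2) a * qpi (s ^ 2) (-a) * qpi (s ^ 2) (s * a) * qpi (s ^ 2) (-(s * a)) =
      qpi (s ^ 2) (a ^ 2) := by
  rw [mul_assoc, qpi_mul_qpi_neg hs, qpi_mul_qpi_neg hs, mul_pow, qpi_sq_mul_qpi_sq_mul hs]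

/-- The products of the Askey-Wilson formula at `(a,b,c,d) = (s,-s,q,-q)`, where `q = s²`. -/
lemma qpi_sqrt_pairs {s : ℂ} (hs : ‖s ^ 2‖ < 1) :
    qpi (s ^ 2) (-s ^ 2) * (qpi (s ^ 2) (s * s ^ 2) * qpi (s ^ 2) (-(s * s ^ 2))) ^ 2 *
      qpi (s ^ 2) (-(s ^ 2 * s ^ 2)) * qpi (s ^ 2) (s ^ 2) =
        qpi (s ^ 2) (s ^ 2 * (s ^ 2 * s ^ 2)) := by
  have hdup := qpi_duplication hs (s ^ 2)
  have hpos := qpi_eq_one_sub_mul hs (s ^ 2)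
  have hneg := qpi_eq_one_sub_mul hs (-s ^ 2)
  have hsq := qpi_eq_one_sub_mul hs (s ^ 2 * s ^ 2)
  rw [sq (s ^ 2)] at hdup
  rw [mul_neg] at hneg
  have hone : 1 - s ^ 2 * s ^ 2 ≠ 0 :=
    one_sub_ne_zero_of_norm_lt_one (norm_mul_lt_one hs hs.le)
  set q := s ^ 2
  have htail : qpi q (q * q) * qpi q (-(q * q)) * qpi q (s * q) * qpi q (-(s * q)) =
      qpi q (q * (q * q)) := by
    apply mul_left_cancel₀ hone
    calc _ = ((1 - q) * qpi q (q * q)) * ((1 - -q) * qpi q (-(q * q))) *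
          qpi q (s * q) * qpi q (-(s * q)) := by ring
      _ = (1 - q * q) * qpi q (q * (q * q)) := by rw [← hpos, ← hneg, hdup, hsq]
  rw [← htail, ← hdup]
  ring

end ShiftedFactorial

/-! ### The Askey-Wilson weight -/

section Weight

variable {q a b c d z w : ℂ}

/-- The denominator of the Askey-Wilson weight, with `z⁻¹` replaced by an independent variable `w`:
the contour shift also needs it at `w = q * z⁻¹`. -/
def AWdenom (q a b c d z w : ℂ) : ℂ :=
  qpi q (a * z) * qpi q (a * w) * qpi q (b * z) * qpi q (b * w) *
    qpi q (c * z) * qpi q (c * w) * qpi q (d * z) * qpi q (d * w)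

/-- The Askey-Wilson weight without the factors `1 - z²` and `1 - z⁻²` of its numerator. -/
def AWkernel (q a b c d z : ℂ) : ℂ :=
  qpi q (q * z ^ 2) * qpi q (q * z⁻¹ ^ 2) / AWdenom q a b c d z z⁻¹

lemma AWdenom_comm (q a b c d z w : ℂ) : AWdenom q a b c d z w = AWdenom q a b c d w z := by
  unfold AWdenom
  ring

lemma AWdenom_ne_zero (hq : ‖q‖ < 1) (ha : ‖a‖ < 1) (hb : ‖b‖ < 1) (hc : ‖c‖ < 1) (hd : ‖d‖ < 1)
    (hz : ‖z‖ ≤ 1) (hw : ‖w‖ ≤ 1) : AWdenom q a b c d z w ≠ 0 := by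
  have h {x y : ℂ} (hx : ‖x‖ < 1) (hy : ‖y‖ ≤ 1) : qpi q (x * y) ≠ 0 :=
    qpi_ne_zero hq (norm_mul_lt_one hx hy)
  simp only [AWdenom, ne_eq, mul_eq_zero, not_or]
  exact ⟨⟨⟨⟨⟨⟨⟨h ha hz, h ha hw⟩, h hb hz⟩, h hb hw⟩, h hc hz⟩, h hc hw⟩, h hd hz⟩, h hd hw⟩

lemma AWdenom_eq_mul_AWdenom_param (hq : ‖q‖ < 1) (a b c d z w : ℂ) :
    AWdenom q a b c d z w = (1 - a * z) * (1 - a * w) * AWdenom q (q * a) b c d z w := by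
  simp only [AWdenom, qpi_eq_one_sub_mul hq (a * z), qpi_eq_one_sub_mul hq (a * w), mul_assoc q]
  ring

lemma AWdenom_eq_mul_AWdenom_var (hq : ‖q‖ < 1) (a b c d z w : ℂ) :
    AWdenom q a b c d z w =
      (1 - a * w) * (1 - b * w) * (1 - c * w) * (1 - d * w) * AWdenom q a b c d z (q * w) := by
  simp only [AWdenom, qpi_eq_one_sub_mul hq (a * w), qpi_eq_one_sub_mul hq (b * w),
    qpi_eq_one_sub_mul hq (c * w), qpi_eq_one_sub_mul hq (d * w), mul_left_comm q]
  ring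

lemma AWw_eq_div_AWdenom (q a b c d z : ℂ) :
    AWw q a b c d z = qpi q (z ^ 2) * qpi q (z⁻¹ ^ 2) / AWdenom q a b c d z z⁻¹ :=
  rfl

lemma AWw_eq_mul_AWkernel (hq : ‖q‖ < 1) (a b c d z : ℂ) :
    AWw q a b c d z = (1 - z ^ 2) * (1 - z⁻¹ ^ 2) * AWkernel q a b c d z := by
  rw [AWw_eq_div_AWdenom, qpi_eq_one_sub_mul hq (z ^ 2), qpi_eq_one_sub_mul hq (z⁻¹ ^ 2), AWkernel]
  ring

lemma AWkernel_inv (q a b c d z : ℂ) : AWkernel q a b c d z⁻¹ = AWkernel q a b c d z := by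
  rw [AWkernel, AWkernel, inv_inv, AWdenom_comm, mul_comm (qpi q (q * z⁻¹ ^ 2))]

lemma AWw_inv (q a b c d z : ℂ) : AWw q a b c d z⁻¹ = AWw q a b c d z := by
  rw [AWw_eq_div_AWdenom, AWw_eq_div_AWdenom, inv_inv, AWdenom_comm, mul_comm (qpi q (z⁻¹ ^ 2))]

lemma AWw_mul_left (hq : ‖q‖ < 1) (b c d : ℂ) (hz : 1 - a * z ≠ 0) (hz' : 1 - a * z⁻¹ ≠ 0) :
    AWw q (q * a) b c d z = (1 - a * z) * (1 - a * z⁻¹) * AWw q a b c d z := by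
  rw [AWw_eq_div_AWdenom, AWw_eq_div_AWdenom, AWdenom_eq_mul_AWdenom_param hq a, mul_div_assoc',
    mul_div_mul_left _ _ (mul_ne_zero hz hz')]

lemma AWw_rotate (q a b c d z : ℂ) : AWw q b c d a z = AWw q a b c d z := by
  unfold AWw
  ring

lemma continuousOn_AWw (hq : ‖q‖ < 1) (hb : ‖b‖ < 1) (hc : ‖c‖ < 1) (hd : ‖d‖ < 1) :
    ContinuousOn (fun p : ℂ × ℂ => AWw q p.1 b c d p.2) (ball 0 1 ×ˢ sphere 0 1) := by
  have hqpi := continuous_qpi hq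
  have hinv : ContinuousOn (fun p : ℂ × ℂ => p.2⁻¹) (ball 0 1 ×ˢ sphere 0 1) :=
    continuousOn_snd.inv₀ fun p hp => ne_of_mem_sphere hp.2 one_ne_zero
  have hcomp {f : ℂ × ℂ → ℂ} (hf : ContinuousOn f (ball 0 1 ×ˢ sphere 0 1)) :
      ContinuousOn (fun p => qpi q (f p)) (ball 0 1 ×ˢ sphere 0 1) :=
    hqpi.comp_continuousOn hf
  simp only [AWw_eq_div_AWdenom]
  refine ContinuousOn.div ?_ ?_ fun p hp => ?_
  · fun_prop
  · unfold AWdenom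
    fun_prop
  · have hz : ‖p.2‖ = 1 := mem_sphere_zero_iff_norm.mp hp.2
    exact AWdenom_ne_zero hq (mem_ball_zero_iff.mp hp.1) hb hc hd hz.le (by simp [hz])

lemma circleIntegrable_AWw (hq : ‖q‖ < 1) (ha : ‖a‖ < 1) (hb : ‖b‖ < 1) (hc : ‖c‖ < 1)
    (hd : ‖d‖ < 1) : CircleIntegrable (AWw q a b c d) 0 1 :=
  ((continuousOn_AWw hq hb hc hd).comp (f := fun z => (a, z)) (by fun_prop)
    fun _ hz => ⟨mem_ball_zero_iff.mpr ha, hz⟩).circleIntegrable zero_le_one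

end Weight

/-! ### The contour shift -/

section ContourShift

variable {q a b c d z : ℂ}

/-- The function whose antisymmetry under `z ↦ q * z⁻¹` yields, after moving the contour from
`‖z‖ = 1` to `‖z‖ = ‖q‖`, the linear relation between moments of the Askey-Wilson weight. -/
def AWantisymm (q a b c d z : ℂ) : ℂ :=
  z * qpi q (z ^ 2) * qpi q (q * z⁻¹ ^ 2) / AWdenom q a b c d z (q * z⁻¹)

lemma AWantisymm_mul_left (hq : ‖q‖ < 1) (hq0 : q ≠ 0) (a b c d : ℂ) (hz : z ≠ 0) :
    AWantisymm q a b c d (q * z) = -AWantisymm q a b c d z⁻¹ := by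
  have hinv : q * (q * z)⁻¹ = z⁻¹ := by field_simp
  have hinvsq : qpi q (q * (q * z)⁻¹ ^ 2) = (1 - q⁻¹ * z⁻¹ ^ 2) * qpi q (z⁻¹ ^ 2) := by
    rw [show q * (q * z)⁻¹ ^ 2 = q⁻¹ * z⁻¹ ^ 2 by field_simp, qpi_eq_one_sub_mul hq,
      mul_inv_cancel_left₀ hq0]
  have hsq : qpi q (q * z⁻¹⁻¹ ^ 2) = (1 - q * z ^ 2) * qpi q ((q * z) ^ 2) := by
    rw [inv_inv, qpi_eq_one_sub_mul hq, ← mul_assoc, ← sq, ← mul_pow]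
  rw [AWantisymm, AWantisymm, hinvsq, hsq, hinv, inv_inv, AWdenom_comm, ← neg_div]
  congr 1
  field_simp
  ring

lemma differentiableAt_AWantisymm (hq : ‖q‖ < 1) (ha : ‖a‖ < 1) (hb : ‖b‖ < 1) (hc : ‖c‖ < 1)
    (hd : ‖d‖ < 1) (hqz : ‖q‖ ≤ ‖z‖) (hz : ‖z‖ ≤ 1) :
    DifferentiableAt ℂ (AWantisymm q a b c d) z := by
  have hqpi := differentiable_qpi hq
  have hinv (n : ℕ) : DifferentiableAt ℂ (fun z => q * z⁻¹ ^ n) z := by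
    rcases eq_or_ne z 0 with rfl | hz0
    · simp [show q = 0 by simpa using hqz]
    · fun_prop (disch := exact hz0)
  have hcomp {f : ℂ → ℂ} (hf : DifferentiableAt ℂ f z) :
      DifferentiableAt ℂ (fun z => qpi q (f z)) z :=
    (hqpi (f z)).comp z hf
  have hinv₁ : DifferentiableAt ℂ (fun z => q * z⁻¹) z := by simpa using hinv 1
  have hqz' : ‖q * z⁻¹‖ ≤ 1 := by
    rw [← div_eq_mul_inv, norm_div]
    exact div_le_one_of_le₀ hqz (norm_nonneg z)
  refine DifferentiableAt.fun_div ?_ ?_ (AWdenom_ne_zero hq ha hb hc hd hz hqz')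
  · have := hinv 2
    fun_prop
  · unfold AWdenom
    fun_prop

lemma circleAverage_AWantisymm (hq : ‖q‖ < 1) (ha : ‖a‖ < 1) (hb : ‖b‖ < 1) (hc : ‖c‖ < 1)
    (hd : ‖d‖ < 1) : circleAverage (AWantisymm q a b c d) 0 1 = 0 := by
  have hdiff {z : ℂ} (hqz : ‖q‖ ≤ ‖z‖) (hz : ‖z‖ ≤ 1) :=
    differentiableAt_AWantisymm hq ha hb hc hd hqz hz
  rcases eq_or_ne q 0 with rfl | hq0
  · have hcont : DiffContOnCl ℂ (AWantisymm 0 a b c d) (ball 0 |1|) :=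
      DifferentiableOn.diffContOnCl fun z hz => by
        rw [abs_one, closure_ball _ one_ne_zero, mem_closedBall_zero_iff] at hz
        exact (hdiff (by simp) hz).differentiableWithinAt
    rw [hcont.circleAverage, AWantisymm, zero_mul, zero_mul, zero_div]
  · have hcontour : circleAverage (AWantisymm q a b c d) 0 1 =
        circleAverage (AWantisymm q a b c d) 0 ‖q‖ :=
      circleAverage_eq_of_differentiableAt_annulus (norm_pos_iff.mpr hq0) hq.le fun z hz =>
        hdiff (by simpa using hz.2) (by simpa using hz.1)
    have hreflect : circleAverage (AWantisymm q a b c d) 0 ‖q‖ =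
        -circleAverage (AWantisymm q a b c d) 0 1 := by
      calc circleAverage (AWantisymm q a b c d) 0 ‖q‖
          = circleAverage (fun z => AWantisymm q a b c d (q * z)) 0 1 := by
            rw [circleAverage_comp_mul_left, mul_one]
        _ = circleAverage (fun z => (-1 : ℝ) • AWantisymm q a b c d z⁻¹) 0 1 := by
            refine Real.circleAverage_congr_sphere fun z hz => ?_
            have hz0 : z ≠ 0 := ne_of_mem_sphere hz (by simp)
            simp [AWantisymm_mul_left hq hq0 a b c d hz0]
        _ = -circleAverage (AWantisymm q a b c d) 0 1 := by
            rw [Real.circleAverage_fun_smul, Real.circleAverage_zero_one_congr_inv, neg_one_smul]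
    exact self_eq_neg.mp (hcontour.trans hreflect)

lemma AWantisymm_eq_mul_AWkernel (hq : ‖q‖ < 1) (ha : ‖a‖ < 1) (hb : ‖b‖ < 1) (hc : ‖c‖ < 1)
    (hd : ‖d‖ < 1) (hz : ‖z‖ = 1) :
    AWantisymm q a b c d z = z * (1 - z ^ 2) *
      ((1 - a * z⁻¹) * (1 - b * z⁻¹) * (1 - c * z⁻¹) * (1 - d * z⁻¹)) * AWkernel q a b c d z := by
  have hfactor {x : ℂ} (hx : ‖x‖ < 1) : 1 - x * z⁻¹ ≠ 0 :=
    one_sub_ne_zero_of_norm_lt_one (norm_mul_lt_one hx (by simp [hz]))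
  have hfactors : (1 - a * z⁻¹) * (1 - b * z⁻¹) * (1 - c * z⁻¹) * (1 - d * z⁻¹) ≠ 0 :=
    mul_ne_zero (mul_ne_zero (mul_ne_zero (hfactor ha) (hfactor hb)) (hfactor hc)) (hfactor hd)
  rw [AWantisymm, AWkernel, AWdenom_eq_mul_AWdenom_var hq a b c d z z⁻¹,
    qpi_eq_one_sub_mul hq (z ^ 2), mul_assoc (z * (1 - z ^ 2)), mul_div_assoc',
    mul_div_mul_left _ _ hfactors]
  ring

lemma AWantisymm_add_AWantisymm_inv (hq : ‖q‖ < 1) (ha : ‖a‖ < 1) (hb : ‖b‖ < 1) (hc : ‖c‖ < 1)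
    (hd : ‖d‖ < 1) (hz : ‖z‖ = 1) :
    AWantisymm q a b c d z + AWantisymm q a b c d z⁻¹ =
      ((1 - a * b * c * d) * (z + z⁻¹) -
        (a + b + c + d - (a * b * c + a * b * d + a * c * d + b * c * d))) * AWw q a b c d z := by
  have hz0 : z ≠ 0 := norm_ne_zero_iff.mp (by simp [hz])
  rw [AWantisymm_eq_mul_AWkernel hq ha hb hc hd hz,
    AWantisymm_eq_mul_AWkernel hq ha hb hc hd (by simpa using hz), AWkernel_inv,
    AWw_eq_mul_AWkernel hq, ← add_mul, ← mul_assoc _ _ (AWkernel q a b c d z)]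
  congr 1
  field_simp
  ring

lemma one_sub_mul_AWw_mul_left (hq : ‖q‖ < 1) (ha : ‖a‖ < 1) (hb : ‖b‖ < 1) (hc : ‖c‖ < 1)
    (hd : ‖d‖ < 1) (hz : ‖z‖ = 1) :
    (1 - a * b * c * d) * AWw q (q * a) b c d z =
      (1 - a * b) * (1 - a * c) * (1 - a * d) * AWw q a b c d z -
        a * (AWantisymm q a b c d z + AWantisymm q a b c d z⁻¹) := by
  have hz0 : z ≠ 0 := norm_ne_zero_iff.mp (by simp [hz])
  rw [AWantisymm_add_AWantisymm_inv hq ha hb hc hd hz, AWw_mul_left hq b c d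
    (one_sub_ne_zero_of_norm_lt_one (norm_mul_lt_one ha hz.le))
    (one_sub_ne_zero_of_norm_lt_one (norm_mul_lt_one ha (by simp [hz])))]
  field_simp
  ring

theorem one_sub_mul_circleAverage_AWw_mul_left (hq : ‖q‖ < 1) (ha : ‖a‖ < 1) (hb : ‖b‖ < 1)
    (hc : ‖c‖ < 1) (hd : ‖d‖ < 1) :
    (1 - a * b * c * d) * circleAverage (AWw q (q * a) b c d) 0 1 =
      (1 - a * b) * (1 - a * c) * (1 - a * d) * circleAverage (AWw q a b c d) 0 1 := by
  have hcont : ContinuousOn (AWantisymm q a b c d) (sphere 0 1) := fun z hz => by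
    rw [mem_sphere_zero_iff_norm] at hz
    exact (differentiableAt_AWantisymm hq ha hb hc hd (hz ▸ hq.le)
      hz.le).continuousAt.continuousWithinAt
  have hg : CircleIntegrable (AWantisymm q a b c d) 0 1 := hcont.circleIntegrable zero_le_one
  have hg' : CircleIntegrable (fun z => AWantisymm q a b c d z⁻¹) 0 1 :=
    (hcont.comp (continuousOn_inv₀.mono fun z hz => ne_of_mem_sphere hz one_ne_zero)
      fun z hz => by simpa using hz).circleIntegrable zero_le_one
  have hsum :
      circleAverage (fun z => AWantisymm q a b c d z + AWantisymm q a b c d z⁻¹) 0 1 = 0 := by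
    rw [Real.circleAverage_fun_add hg hg', Real.circleAverage_zero_one_congr_inv,
      circleAverage_AWantisymm hq ha hb hc hd, add_zero]
  have hmul (k : ℂ) (f : ℂ → ℂ) : circleAverage (fun z => k * f z) 0 1 = k * circleAverage f 0 1 :=
    Real.circleAverage_fun_smul (a := k)
  have hint (k : ℂ) {f : ℂ → ℂ} (hf : CircleIntegrable f 0 1) :
      CircleIntegrable (fun z => k * f z) 0 1 :=
    hf.const_fun_smul
  calc (1 - a * b * c * d) * circleAverage (AWw q (q * a) b c d) 0 1
      = circleAverage (fun z => (1 - a * b) * (1 - a * c) * (1 - a * d) * AWw q a b c d z -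
          a * (AWantisymm q a b c d z + AWantisymm q a b c d z⁻¹)) 0 1 := by
        rw [← hmul]
        exact Real.circleAverage_congr_sphere fun z hz =>
          one_sub_mul_AWw_mul_left hq ha hb hc hd (by simpa using hz)
    _ = (1 - a * b) * (1 - a * c) * (1 - a * d) * circleAverage (AWw q a b c d) 0 1 := by
        rw [Real.circleAverage_fun_sub (hint _ (circleIntegrable_AWw hq ha hb hc hd))
          (hint a (hg.fun_add hg')), hmul, hmul, hsum, mul_zero, sub_zero]

end ContourShift

/-! ### Evaluation of the integral -/

section Evaluation

variable {q a b c d : ℂ}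

/-- The average of the Askey-Wilson weight over the unit circle, divided by the parameter-dependent
part `(abcd;q)_∞ / (ab,ac,ad,bc,bd,cd;q)_∞` of its expected value. -/
def normalizedAWAverage (q a b c d : ℂ) : ℂ :=
  qpi q (a * b) * qpi q (a * c) * qpi q (a * d) * qpi q (b * c) * qpi q (b * d) * qpi q (c * d) /
    qpi q (a * b * c * d) * circleAverage (AWw q a b c d) 0 1

lemma normalizedAWAverage_rotate (q a b c d : ℂ) :
    normalizedAWAverage q b c d a = normalizedAWAverage q a b c d := by
  simp only [normalizedAWAverage, funext (AWw_rotate q a b c d), mul_comm b a, mul_comm c a,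
    mul_comm d a, show b * c * d * a = a * b * c * d by ring]
  ring

lemma normalizedAWAverage_mul_left (hq : ‖q‖ < 1) (ha : ‖a‖ < 1) (hb : ‖b‖ < 1) (hc : ‖c‖ < 1)
    (hd : ‖d‖ < 1) : normalizedAWAverage q (q * a) b c d = normalizedAWAverage q a b c d := by
  have habcd := norm_mul_mul_mul_lt_one ha hb hc hd
  have hne := one_sub_ne_zero_of_norm_lt_one habcd
  have hqpi : qpi q (q * (a * b * c * d)) ≠ 0 := by
    rw [mul_comm]
    exact qpi_ne_zero hq (norm_mul_lt_one habcd hq.le)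
  simp only [normalizedAWAverage, mul_assoc q a, qpi_eq_one_sub_mul hq (a * b),
    qpi_eq_one_sub_mul hq (a * c), qpi_eq_one_sub_mul hq (a * d),
    qpi_eq_one_sub_mul hq (a * b * c * d), mul_assoc q]
  rw [div_mul_eq_mul_div, div_mul_eq_mul_div, div_eq_div_iff hqpi (mul_ne_zero hne hqpi)]
  linear_combination qpi q (q * (a * b * c * d)) * qpi q (q * (a * b)) * qpi q (q * (a * c)) *
    qpi q (q * (a * d)) * qpi q (b * c) * qpi q (b * d) * qpi q (c * d) *
      one_sub_mul_circleAverage_AWw_mul_left hq ha hb hc hd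

lemma continuousOn_normalizedAWAverage (hq : ‖q‖ < 1) (hb : ‖b‖ < 1) (hc : ‖c‖ < 1)
    (hd : ‖d‖ < 1) : ContinuousOn (fun a => normalizedAWAverage q a b c d) (ball 0 1) := by
  have hqpi := continuous_qpi hq
  have havg : ContinuousOn (fun a => circleAverage (AWw q a b c d) 0 1) (ball 0 1) :=
    continuousOn_circleAverage_of_continuousOn_prod (by simpa using continuousOn_AWw hq hb hc hd)
  unfold normalizedAWAverage
  refine ContinuousOn.mul (ContinuousOn.div (by fun_prop) (by fun_prop) fun a ha => ?_) havg
  exact qpi_ne_zero hq (norm_mul_mul_mul_lt_one (mem_ball_zero_iff.mp ha) hb hc hd)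

lemma normalizedAWAverage_eq_apply_zero_left (hq : ‖q‖ < 1) (ha : ‖a‖ < 1) (hb : ‖b‖ < 1)
    (hc : ‖c‖ < 1) (hd : ‖d‖ < 1) :
    normalizedAWAverage q a b c d = normalizedAWAverage q 0 b c d := by
  have hconst (n : ℕ) :
      normalizedAWAverage q (a * q ^ n) b c d = normalizedAWAverage q a b c d := by
    induction n with
    | zero => simp
    | succ n ih =>
      rw [← ih, pow_succ', mul_left_comm,
        normalizedAWAverage_mul_left hq (norm_mul_pow_lt_one hq ha n) hb hc hd]
  have hlim : Tendsto (fun n : ℕ => a * q ^ n) atTop (𝓝 0) := by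
    simpa using (tendsto_pow_atTop_nhds_zero_of_norm_lt_one hq).const_mul a
  have hcont := (continuousOn_normalizedAWAverage hq hb hc hd).continuousAt
    (ball_mem_nhds 0 one_pos)
  refine tendsto_nhds_unique (tendsto_const_nhds.congr fun n => ?_) (hcont.tendsto.comp hlim)
  exact (hconst n).symm

lemma normalizedAWAverage_eq_apply_zero (hq : ‖q‖ < 1) (ha : ‖a‖ < 1) (hb : ‖b‖ < 1) (hc : ‖c‖ < 1)
    (hd : ‖d‖ < 1) : normalizedAWAverage q a b c d = normalizedAWAverage q 0 0 0 0 := by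
  have h0 : ‖(0 : ℂ)‖ < 1 := by simp
  calc normalizedAWAverage q a b c d
      = normalizedAWAverage q b c d 0 := by
        rw [normalizedAWAverage_eq_apply_zero_left hq ha hb hc hd, ← normalizedAWAverage_rotate q 0]
    _ = normalizedAWAverage q c d 0 0 := by
        rw [normalizedAWAverage_eq_apply_zero_left hq hb hc hd h0, ← normalizedAWAverage_rotate q 0]
    _ = normalizedAWAverage q d 0 0 0 := by
        rw [normalizedAWAverage_eq_apply_zero_left hq hc hd h0 h0, ← normalizedAWAverage_rotate q 0]
    _ = normalizedAWAverage q 0 0 0 0 := normalizedAWAverage_eq_apply_zero_left hq hd h0 h0 h0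

lemma AWkernel_sqrt {s z : ℂ} (hs : ‖s ^ 2‖ < 1) (hz : ‖z‖ = 1) :
    AWkernel (s ^ 2) s (-s) (s ^ 2) (-s ^ 2) z = 1 := by
  have hdup (w : ℂ) : qpi (s ^ 2) (s * w) * qpi (s ^ 2) (-s * w) * qpi (s ^ 2) (s ^ 2 * w) *
      qpi (s ^ 2) (-s ^ 2 * w) = qpi (s ^ 2) (s ^ 2 * w ^ 2) := by
    rw [← mul_pow, ← qpi_duplication hs (s * w)]
    ring_nf
  have hne {w : ℂ} (hw : ‖w‖ = 1) : qpi (s ^ 2) (s ^ 2 * w ^ 2) ≠ 0 :=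
    qpi_ne_zero hs (norm_mul_lt_one hs (by simp [hw]))
  have hdenom : AWdenom (s ^ 2) s (-s) (s ^ 2) (-s ^ 2) z z⁻¹ =
      qpi (s ^ 2) (s ^ 2 * z ^ 2) * qpi (s ^ 2) (s ^ 2 * z⁻¹ ^ 2) := by
    rw [← hdup, ← hdup, AWdenom]
    ring
  rw [AWkernel, hdenom, div_self (mul_ne_zero (hne hz) (hne (by simp [hz])))]

lemma circleAverage_AWw_sqrt {s : ℂ} (hs : ‖s ^ 2‖ < 1) :
    circleAverage (AWw (s ^ 2) s (-s) (s ^ 2) (-s ^ 2)) 0 1 = 2 := by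
  have hsq : circleAverage (fun z : ℂ => z ^ 2) 0 1 = 0 := circleAverage_pow_zero_one two_ne_zero
  have hinvsq : circleAverage (fun z : ℂ => z⁻¹ ^ 2) 0 1 = 0 := by
    rw [Real.circleAverage_zero_one_congr_inv (f := fun z => z ^ 2), hsq]
  have hsq_int : CircleIntegrable (fun z : ℂ => z ^ 2) 0 1 :=
    ContinuousOn.circleIntegrable zero_le_one (by fun_prop)
  have hinvsq_int : CircleIntegrable (fun z : ℂ => z⁻¹ ^ 2) 0 1 :=
    ((continuousOn_inv₀.mono fun z hz => ne_of_mem_sphere hz one_ne_zero).pow 2).circleIntegrable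
      zero_le_one
  calc circleAverage (AWw (s ^ 2) s (-s) (s ^ 2) (-s ^ 2)) 0 1
      = circleAverage (fun z : ℂ => 2 - (z ^ 2 + z⁻¹ ^ 2)) 0 1 := by
        refine Real.circleAverage_congr_sphere fun z hz => ?_
        have hz0 : z ≠ 0 := ne_of_mem_sphere hz (by simp)
        rw [AWw_eq_mul_AWkernel hs, AWkernel_sqrt hs (by simpa using hz)]
        field_simp
        ring
    _ = 2 := by
        rw [Real.circleAverage_fun_sub (circleIntegrable_const 2 0 1) (hsq_int.fun_add hinvsq_int),
          Real.circleAverage_fun_add hsq_int hinvsq_int, Real.circleAverage_const, hsq, hinvsq,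
          add_zero, sub_zero]

lemma normalizedAWAverage_sqrt {s : ℂ} (hs : ‖s ^ 2‖ < 1) :
    normalizedAWAverage (s ^ 2) s (-s) (s ^ 2) (-s ^ 2) = 2 / qpi (s ^ 2) (s ^ 2) := by
  have hq : qpi (s ^ 2) (s ^ 2) ≠ 0 := qpi_ne_zero hs hs
  have hq₃ : qpi (s ^ 2) (s ^ 2 * (s ^ 2 * s ^ 2)) ≠ 0 :=
    qpi_ne_zero hs (norm_mul_lt_one hs (norm_mul_lt_one hs hs.le).le)
  have hprod : s * -s * s ^ 2 * -s ^ 2 = s ^ 2 * (s ^ 2 * s ^ 2) := by ring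
  have hprod₂ : s * -s = -s ^ 2 := by ring
  rw [normalizedAWAverage, circleAverage_AWw_sqrt hs, hprod, hprod₂, neg_mul_neg, mul_neg, neg_mul,
    mul_neg, div_mul_eq_mul_div, div_eq_div_iff hq₃ hq, ← qpi_sqrt_pairs hs]
  ring

lemma normalizedAWAverage_eq_two_div (hq : ‖q‖ < 1) (ha : ‖a‖ < 1) (hb : ‖b‖ < 1)
    (hc : ‖c‖ < 1) (hd : ‖d‖ < 1) : normalizedAWAverage q a b c d = 2 / qpi q q := by
  obtain ⟨s, rfl⟩ := IsAlgClosed.exists_pow_nat_eq q two_pos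
  have hs : ‖s‖ < 1 := by
    rwa [norm_pow, sq_lt_one_iff₀ (norm_nonneg s)] at hq
  rw [normalizedAWAverage_eq_apply_zero hq ha hb hc hd, ← normalizedAWAverage_sqrt hq,
    normalizedAWAverage_eq_apply_zero hq hs (by simpa) hq (by simpa)]

theorem circleAverage_AWw (hq : ‖q‖ < 1) (ha : ‖a‖ < 1) (hb : ‖b‖ < 1) (hc : ‖c‖ < 1)
    (hd : ‖d‖ < 1) :
    circleAverage (AWw q a b c d) 0 1 = 2 * qpi q (a * b * c * d) /
      (qpi q (a * b) * qpi q (a * c) * qpi q (a * d) * qpi q (b * c) * qpi q (b * d) *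
        qpi q (c * d) * qpi q q) := by
  have h := normalizedAWAverage_eq_two_div hq ha hb hc hd
  have hpair {x y : ℂ} (hx : ‖x‖ < 1) (hy : ‖y‖ < 1) : qpi q (x * y) ≠ 0 :=
    qpi_ne_zero hq (norm_mul_lt_one hx hy.le)
  have hpairs : qpi q (a * b) * qpi q (a * c) * qpi q (a * d) * qpi q (b * c) * qpi q (b * d) *
      qpi q (c * d) ≠ 0 := by
    simp only [ne_eq, mul_eq_zero, not_or]
    exact ⟨⟨⟨⟨⟨hpair ha hb, hpair ha hc⟩, hpair ha hd⟩, hpair hb hc⟩, hpair hb hd⟩, hpair hc hd⟩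
  have habcd := qpi_ne_zero hq (norm_mul_mul_mul_lt_one ha hb hc hd)
  have hqq := qpi_ne_zero hq hq
  rw [normalizedAWAverage, div_mul_eq_mul_div, div_eq_div_iff habcd hqq] at h
  rw [eq_div_iff (mul_ne_zero hpairs hqq), ← h]
  ring

end Evaluation

theorem stmt18_general (q : ℂ) (hq : ‖q‖ < 1) (a b c d : ℂ)
    (hA : ‖a‖ < 1) (hB : ‖b‖ < 1) (hC : ‖c‖ < 1) (hD : ‖d‖ < 1) :
    (2 * (Real.pi : ℂ))⁻¹ *
        ∫ θ in (0 : ℝ)..Real.pi, AWw q a b c d (Complex.exp ((θ : ℂ) * Complex.I)) =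
      qpi q (a * b * c * d) /
        (qpi q (a * b) * qpi q (a * c) * qpi q (a * d) *
          qpi q (b * c) * qpi q (b * d) * qpi q (c * d) * qpi q q) := by
  have havg := circleAverage_eq_integral_upper_half (circleIntegrable_AWw hq hA hB hC hD)
    fun z _ => AWw_inv q a b c d z
  simp only [circleMap_zero, Complex.ofReal_one, one_mul, Complex.real_smul, Complex.ofReal_inv]
    at havg
  rw [mul_inv, mul_assoc, ← havg, circleAverage_AWw hq hA hB hC hD, mul_div_assoc,
    inv_mul_cancel_left₀ two_ne_zero]

/-- Evaluation of the Askey-Wilson integral: for `0<q<1` and `|a|,|b|,|c|,|d|<1`,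
`(2π)⁻¹ ∫_0^π w_{a,b,c,d}(e^{iθ}) dθ = (abcd;q)_∞ / (ab,ac,ad,bc,bd,cd,q;q)_∞`. -/
theorem stmt18 (q : ℝ) (hq0 : 0 < q) (hq1 : q < 1) (a b c d : ℂ)
    (hA : ‖a‖ < 1) (hB : ‖b‖ < 1) (hC : ‖c‖ < 1) (hD : ‖d‖ < 1) :
    (2 * (Real.pi : ℂ))⁻¹ *
        ∫ θ in (0 : ℝ)..Real.pi, AWw (q : ℂ) a b c d (Complex.exp ((θ : ℂ) * Complex.I)) =
      qpi (q : ℂ) (a * b * c * d) /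
        (qpi (q : ℂ) (a * b) * qpi (q : ℂ) (a * c) * qpi (q : ℂ) (a * d) *
          qpi (q : ℂ) (b * c) * qpi (q : ℂ) (b * d) * qpi (q : ℂ) (c * d) *
          qpi (q : ℂ) (q : ℂ)) :=
  stmt18_general q (by simpa [abs_of_pos hq0] using hq1) a b c d hA hB hC hD
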